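/- arXiv:0810.3864 — 2 statements merged into one kernel-verified Lean document; each statement's English description precedes it below -/
import Mathlib

section
/- Let K be an algebraically closed field of characteristic zero, let G be an n×n matrix over K with exactly m distinct eigenvalues, and let l ≥ 1 be an integer. Then det M_{m,l}(G) = 0 if and only if G is degenerate, i.e. det G = 0. -/
open Polynomial Matrix

/-!
The trace of `G ^ p` is the power sum `∑ μ a * a ^ p` over the distinct eigenvalues `a` of `G` with
multiplicities `μ a`. Hence the matrix of the traces `tr G ^ (i + j + l)` factors as `Vᵀ D V`, where
`V` is the Vandermonde matrix of the distinct eigenvalues and `D` is diagonal with entries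
`μ a * a ^ l`. As `V` is nonsingular, the determinant vanishes iff some `μ a * a ^ l` does, which
for nonzero multiplicities and `l ≥ 1` means that `0` is an eigenvalue.
-/

lemma map_aeval_matrix {n R S : Type*} [Fintype n] [DecidableEq n] [CommSemiring R]
    [CommSemiring S] (f : R →+* S) (G : Matrix n n R) (q : R[X]) :
    (aeval G q).map f = aeval (G.map f) (q.map f) :=
  map_aeval_eq_aeval_map (ψ := f.mapMatrix)
    (by ext; simp [algebraMap_matrix_apply, apply_ite f]) q G

section Eigenvalues

variable {n R : Type*} [Fintype n] [DecidableEq n] [CommRing R] [IsDomain R]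

lemma det_add_scalar_eq_prod_roots_charpoly {G : Matrix n n R} (hG : G.charpoly.Splits) (b : R) :
    (G + scalar n b).det = (G.charpoly.roots.map (· + b)).prod := by
  have hcharpoly : (G + scalar n b).charpoly = G.charpoly.comp (X + C (-b)) := by
    simpa only [map_neg, sub_neg_eq_add] using G.charpoly_sub_scalar (-b)
  have hroots : (G + scalar n b).charpoly.roots = G.charpoly.roots.map (· + b) := by
    rw [hcharpoly]
    simpa using roots_comp_C_mul_X_add_C G.charpoly 1 (-b) isUnit_one
  rw [det_eq_prod_roots_charpoly_of_splits (hcharpoly ▸ hG.comp_X_add_C (-b)), hroots]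

lemma det_aeval_eq_prod_roots_charpoly_of_splits {G : Matrix n n R} (hG : G.charpoly.Splits)
    {q : R[X]} (hq : q.Splits) :
    (aeval G q).det = (G.charpoly.roots.map q.eval).prod := by
  induction hq using Submonoid.closure_induction with
  | mem p hp =>
    obtain ⟨c, rfl⟩ | ⟨b, rfl⟩ := hp
    · simp [algebraMap_eq_diagonal, ← hG.natDegree_eq_card_roots]
    · simpa [algebraMap_eq_diagonal, Pi.algebraMap_def] using
        det_add_scalar_eq_prod_roots_charpoly hG b
  | one => simp
  | mul p r _ _ hp hr => simp [hp, hr]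

lemma det_aeval_eq_prod_roots_charpoly {G : Matrix n n R} (hG : G.charpoly.Splits) (q : R[X]) :
    (aeval G q).det = (G.charpoly.roots.map q.eval).prod := by
  let f := (algebraMap (FractionRing R) (AlgebraicClosure (FractionRing R))).comp
    (algebraMap R (FractionRing R))
  have hf : Function.Injective f :=
    (algebraMap (FractionRing R) (AlgebraicClosure (FractionRing R))).injective.comp
      (IsFractionRing.injective R (FractionRing R))
  have hGf : (G.map f).charpoly.Splits := IsAlgClosed.splits _
  apply hf
  calc f (aeval G q).det
      = (aeval (G.map f) (q.map f)).det := by rw [f.map_det, f.mapMatrix_apply, map_aeval_matrix]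
    _ = ((G.map f).charpoly.roots.map (q.map f).eval).prod :=
        det_aeval_eq_prod_roots_charpoly_of_splits hGf (IsAlgClosed.splits _)
    _ = f (G.charpoly.roots.map q.eval).prod := by
        simp [charpoly_map, hG.roots_map_of_injective hf, map_multiset_prod]

lemma charpoly_aeval_eq_prod_roots_charpoly {G : Matrix n n R} (hG : G.charpoly.Splits)
    (q : R[X]) :
    (aeval G q).charpoly = (G.charpoly.roots.map fun a => X - C (q.eval a)).prod := by
  have hGC : (G.map (C : R →+* R[X])).charpoly.Splits := by
    rw [charpoly_map]
    exact hG.map C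
  -- The characteristic matrix of `q(G)` is itself a polynomial in `G`, with coefficients in `R[X]`.
  have hcharmatrix :
      (aeval G q).charmatrix = aeval (G.map (C : R →+* R[X])) (C X - q.map C) := by
    simp [charmatrix, map_aeval_matrix, algebraMap_eq_diagonal, Pi.algebraMap_def]
  rw [charpoly, hcharmatrix, det_aeval_eq_prod_roots_charpoly hGC, charpoly_map,
    hG.roots_map_of_injective C_injective]
  simp

lemma trace_aeval_eq_sum_roots_charpoly {G : Matrix n n R} (hG : G.charpoly.Splits) (q : R[X]) :
    (aeval G q).trace = (G.charpoly.roots.map q.eval).sum := by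
  have hcharpoly : (aeval G q).charpoly =
      ((G.charpoly.roots.map q.eval).map (X - C ·)).prod := by
    simpa using charpoly_aeval_eq_prod_roots_charpoly hG q
  have hsplits : (aeval G q).charpoly.Splits := by
    rw [hcharpoly]
    refine Splits.multisetProd fun p hp => ?_
    obtain ⟨a, -, rfl⟩ := Multiset.mem_map.mp hp
    exact Splits.X_sub_C a
  rw [trace_eq_sum_roots_charpoly_of_splits hsplits, hcharpoly, roots_multiset_prod_X_sub_C]

lemma trace_pow_eq_sum_rootMultiplicity_charpoly [DecidableEq R] {G : Matrix n n R}
    (hG : G.charpoly.Splits) (p : ℕ) :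
    (G ^ p).trace =
      ∑ a ∈ G.charpoly.roots.toFinset, (G.charpoly.rootMultiplicity a : R) * a ^ p := by
  simpa [Finset.sum_multiset_map_count] using trace_aeval_eq_sum_roots_charpoly hG (X ^ p)

end Eigenvalues

lemma det_hankel_weighted_power_sums {R : Type*} [CommRing R] {m : ℕ} (w v : Fin m → R) :
    (of fun i j : Fin m => ∑ k, w k * v k ^ (i.1 + j.1)).det =
      (vandermonde v).det ^ 2 * ∏ k, w k := by
  have hfactor : (of fun i j : Fin m => ∑ k, w k * v k ^ (i.1 + j.1)) =
      (vandermonde v)ᵀ * diagonal w * vandermonde v := by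
    ext i j
    simp only [of_apply, mul_apply (N := vandermonde v), mul_diagonal, transpose_apply,
      vandermonde_apply]
    exact Finset.sum_congr rfl fun k _ => by ring
  rw [hfactor, det_mul, det_mul, det_transpose, det_diagonal]
  ring

/-- The Hankel matrix `M_{t,l}(G)` of traces of powers of `G`. Since `Fin t` is indexed from `0`,
the exponent `i + j + l - 2` of the `1`-based convention becomes `i + j + l`. -/
def traceHankel {n R : Type*} [Fintype n] [DecidableEq n] [Semiring R] (G : Matrix n n R)
    (t l : ℕ) : Matrix (Fin t) (Fin t) R :=
  of fun i j => (G ^ (i.1 + j.1 + l)).trace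

section TraceHankel

variable {n R : Type*} [Fintype n] [DecidableEq n] [CommRing R] [IsDomain R] [DecidableEq R]

lemma det_traceHankel {G : Matrix n n R} (hG : G.charpoly.Splits) {m : ℕ}
    (e : Fin m ≃ G.charpoly.roots.toFinset) (l : ℕ) :
    (traceHankel G m l).det =
      (vandermonde fun k => (e k : R)).det ^ 2 *
        ∏ a ∈ G.charpoly.roots.toFinset, (G.charpoly.rootMultiplicity a : R) * a ^ l := by
  have hentries : traceHankel G m l = of fun i j : Fin m =>
      ∑ k, ((G.charpoly.rootMultiplicity (e k : R) : R) * (e k : R) ^ l) *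
        (e k : R) ^ (i.1 + j.1) := by
    ext i j
    rw [traceHankel, of_apply, of_apply, trace_pow_eq_sum_rootMultiplicity_charpoly hG,
      ← Finset.sum_coe_sort, ← e.sum_comp]
    exact Finset.sum_congr rfl fun k _ => by ring
  rw [hentries, det_hankel_weighted_power_sums,
    ← Finset.prod_coe_sort G.charpoly.roots.toFinset, ← e.prod_comp]

theorem det_M_l_eq_zero_iff_det_eq_zero_general {G : Matrix n n R} (hG : G.charpoly.Splits)
    (hmult : ∀ a ∈ G.charpoly.roots, (G.charpoly.rootMultiplicity a : R) ≠ 0) {m : ℕ}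
    (hm : G.charpoly.roots.toFinset.card = m) {l : ℕ} (hl : 1 ≤ l) :
    (traceHankel G m l).det = 0 ↔ G.det = 0 := by
  let e := (Finset.equivFinOfCardEq hm).symm
  have hV : (vandermonde fun k => (e k : R)).det ≠ 0 :=
    det_vandermonde_ne_zero_iff.mpr (Subtype.val_injective.comp e.injective)
  have hfactor (a : R) (ha : a ∈ G.charpoly.roots) :
      (G.charpoly.rootMultiplicity a : R) * a ^ l = 0 ↔ a = 0 := by
    rw [mul_eq_zero_iff_left (hmult a ha), pow_eq_zero_iff (Nat.one_le_iff_ne_zero.mp hl)]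
  calc (traceHankel G m l).det = 0
      ↔ ∃ a ∈ G.charpoly.roots, (G.charpoly.rootMultiplicity a : R) * a ^ l = 0 := by
        simp only [det_traceHankel hG e, mul_eq_zero_iff_left (pow_ne_zero 2 hV),
          Finset.prod_eq_zero_iff, Multiset.mem_toFinset]
    _ ↔ 0 ∈ G.charpoly.roots :=
        ⟨fun ⟨a, ha, h⟩ => (hfactor a ha).mp h ▸ ha, fun h => ⟨0, h, (hfactor 0 h).mpr rfl⟩⟩
    _ ↔ G.det = 0 := by
        rw [det_eq_prod_roots_charpoly_of_splits hG, Multiset.prod_eq_zero_iff]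

end TraceHankel

/-- Over an algebraically closed field of characteristic zero, if `G`
has exactly `m` distinct eigenvalues (distinct roots of its characteristic polynomial)
and `l ≥ 1`, then `det M_{m,l}(G) = 0` iff `G` is degenerate, i.e. `det G = 0`.
Here the `(i,j)` entry of `M_{m,l}(G)` (`0`-based) is `tr G^{i+j+l}`. -/
theorem det_M_l_eq_zero_iff_det_eq_zero {K : Type*} [Field K] [IsAlgClosed K]
    [CharZero K] [DecidableEq K] {n m : ℕ} (G : Matrix (Fin n) (Fin n) K)
    (hm : G.charpoly.roots.toFinset.card = m) (l : ℕ) (hl : 1 ≤ l) :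
    (Matrix.of fun i j : Fin m => (G ^ (i.1 + j.1 + l)).trace).det = 0 ↔ G.det = 0 :=
  det_M_l_eq_zero_iff_det_eq_zero_general (IsAlgClosed.splits _)
    (fun _ ha => by simpa only [← count_roots, Nat.cast_ne_zero, Multiset.count_ne_zero]) hm hl
end

section
/- Let K be an algebraically closed field and let G be an n×n matrix over K whose characteristic polynomial is (X − λ)^p (X − μ)^q with λ ≠ μ in K and p, q ≥ 1 (so G has exactly the two eigenvalues λ and μ with multiplicities p and q). Then for every integer l ≥ 0, det M_{1,l}(G) = p·λ^l + q·μ^l, det M_{2,l}(G) = p·q·(λμ)^l·(λ − μ)², and det M_{t,l}(G) = 0 for every t ≥ 3. -/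
open Polynomial Matrix

/-!
Jacobi's formula, applied to `1 - X M` with inverse `∑ Mᵏ Xᵏ`, shows that the generating function
of `tr Mᵏ⁺¹` is minus the logarithmic derivative of `det (1 - X M)`. Hence the characteristic
polynomial determines the traces of all powers, over any commutative ring, and `M` may be replaced
by a diagonal matrix. The traces then become power sums `∑ d_s x_sᵏ`, whose Hankel matrix factors
as `Vᵀ D V` with `D` diagonal and `V` a Vandermonde matrix with one row for each `x_s`. For two
eigenvalues `V` is square when `t = 2` and has too few rows when `t ≥ 3`.
-/

section PowerTraces

variable {R m n : Type*} [CommRing R] [Fintype m] [DecidableEq m] [Fintype n] [DecidableEq n]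

theorem derivative_det_eq_trace_adjugate_mul (A : Matrix m m R[X]) :
    derivative A.det = (A.adjugate * A.map derivative).trace := by
  have hcol (i : m) : (A.adjugate * A.map derivative) i i =
      ∑ σ : Equiv.Perm m, Equiv.Perm.sign σ •
        ((∏ j ∈ Finset.univ.erase i, A (σ j) j) * derivative (A (σ i) i)) := by
    calc (A.adjugate * A.map derivative) i i
        = (A.updateCol i fun j => derivative (A j i)).det := by
          rw [← cramer_apply, cramer_eq_adjugate_mulVec]
          rfl
      _ = _ := by
          refine (det_apply _).trans (Finset.sum_congr rfl fun σ _ => ?_)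
          rw [← Finset.prod_erase_mul _ _ (Finset.mem_univ i), updateCol_self]
          congr 2
          exact Finset.prod_congr rfl fun j hj => updateCol_ne (Finset.ne_of_mem_erase hj)
  simp only [trace, diag_apply, hcol, det_apply, derivative_sum, derivative_smul,
    derivative_prod_finset, Finset.smul_sum]
  exact Finset.sum_comm

theorem adjugate_eq_det_smul_of_mul_eq_one {A B : Matrix m m R} (h : B * A = 1) :
    A.adjugate = A.det • B := by
  calc A.adjugate = B * (A * A.adjugate) := by rw [← mul_assoc, h, one_mul]
    _ = A.det • B := by rw [mul_adjugate, mul_smul_comm, mul_one]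

/-- The geometric series `∑ Mᵏ Xᵏ`, encoded as a matrix of power series rather than as a power
series with matrix coefficients, so that determinants and adjugates apply to its inverse
`1 - X M`. -/
noncomputable def geomSeries (M : Matrix m m R) : Matrix m m (PowerSeries R) :=
  of fun i j => PowerSeries.mk fun k => (M ^ k) i j

theorem geomSeries_mul_map_C (M : Matrix m m R) :
    geomSeries M * M.map PowerSeries.C =
      of fun i j => PowerSeries.mk fun k => (M ^ (k + 1)) i j := by
  ext i j k
  simp [geomSeries, mul_apply, pow_succ]

theorem trace_geomSeries_mul_map_C (M : Matrix m m R) :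
    (geomSeries M * M.map PowerSeries.C).trace =
      PowerSeries.mk fun k => (M ^ (k + 1)).trace := by
  ext k
  simp [geomSeries_mul_map_C, trace]

theorem geomSeries_mul_one_sub_X_smul (M : Matrix m m R) :
    geomSeries M * (1 - (PowerSeries.X : PowerSeries R) • M.map PowerSeries.C) = 1 := by
  rw [mul_sub, mul_one, mul_smul_comm, geomSeries_mul_map_C]
  ext i j (_ | k)
  · by_cases h : i = j <;> simp [geomSeries, one_apply, h]
  · by_cases h : i = j <;>
      simp [geomSeries, one_apply, PowerSeries.coeff_succ_X_mul, PowerSeries.coeff_one, h]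

theorem charpolyRev_mul_mk_trace_pow_succ (M : Matrix m m R) :
    (M.charpolyRev : PowerSeries R) * PowerSeries.mk (fun k => (M ^ (k + 1)).trace) =
      -(derivative M.charpolyRev : R[X]) := by
  let φ : R[X] →+* PowerSeries R := coeToPowerSeries.ringHom
  let A : Matrix m m R[X] := 1 - (X : R[X]) • M.map C
  have hA : φ.mapMatrix A = 1 - (PowerSeries.X : PowerSeries R) • M.map PowerSeries.C := by
    ext1 i j
    simp [A, φ, one_apply, apply_ite, -X_mul_C]
  have hadj : φ.mapMatrix A.adjugate = φ A.det • geomSeries M := by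
    rw [RingHom.map_adjugate, RingHom.map_det]
    exact adjugate_eq_det_smul_of_mul_eq_one (hA ▸ geomSeries_mul_one_sub_X_smul M)
  have hA' : A.map derivative = -M.map C := by
    ext1 i j
    by_cases h : i = j <;> simp [A, h]
  have hC : φ.mapMatrix (M.map C) = M.map PowerSeries.C := by
    ext1 i j
    simp [φ]
  symm
  calc -φ (derivative A.det)
      = φ (A.adjugate * M.map C).trace := by
        rw [derivative_det_eq_trace_adjugate_mul, hA', mul_neg, trace_neg, map_neg, neg_neg]
    _ = (φ.mapMatrix A.adjugate * φ.mapMatrix (M.map C)).trace := by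
        rw [← map_mul]
        exact AddMonoidHom.map_trace φ _
    _ = φ A.det * PowerSeries.mk (fun k => (M ^ (k + 1)).trace) := by
        rw [hadj, hC, smul_mul_assoc, trace_smul, trace_geomSeries_mul_map_C, smul_eq_mul]

theorem trace_pow_eq_of_charpoly_eq {M : Matrix m m R} {N : Matrix n n R}
    (h : M.charpoly = N.charpoly) (k : ℕ) : (M ^ k).trace = (N ^ k).trace := by
  nontriviality R
  obtain _ | k := k
  · have hcard := congrArg natDegree h
    rw [charpoly_natDegree_eq_dim, charpoly_natDegree_eq_dim] at hcard
    simp [hcard]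
  have hrev : M.charpolyRev = N.charpolyRev := by
    rw [← reverse_charpoly, ← reverse_charpoly, h]
  have hunit : IsUnit (M.charpolyRev : PowerSeries R) := by
    rw [PowerSeries.isUnit_iff_constantCoeff]
    simp [coeff_zero_eq_eval_zero]
  have hseries : PowerSeries.mk (fun k => (M ^ (k + 1)).trace) =
      PowerSeries.mk (fun k => (N ^ (k + 1)).trace) := by
    apply hunit.mul_left_cancel
    rw [charpolyRev_mul_mk_trace_pow_succ, hrev, charpolyRev_mul_mk_trace_pow_succ]
  simpa using congrArg (PowerSeries.coeff k) hseries

theorem trace_pow_eq_sum_of_charpoly_eq_prod {ι : Type*} [Fintype ι] {M : Matrix m m R} (x : ι → R)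
    (d : ι → ℕ) (h : M.charpoly = ∏ i, (X - C (x i)) ^ d i) (k : ℕ) :
    (M ^ k).trace = ∑ i, d i * x i ^ k := by
  classical
  have hdiag : M.charpoly = (diagonal fun a : Σ i, Fin (d i) => x a.1).charpoly := by
    simp [h, charpoly_diagonal, Fintype.prod_sigma]
  simp [trace_pow_eq_of_charpoly_eq hdiag, diagonal_pow, Fintype.sum_sigma]

end PowerTraces

section Hankel

variable {R ι : Type*} [CommRing R]

theorem det_mul_eq_zero_of_card_lt {m n : Type*} [Fintype m] [DecidableEq m] [Fintype n]
    (A : Matrix m n R) (B : Matrix n m R) (h : Fintype.card n < Fintype.card m) :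
    (A * B).det = 0 := by
  classical
  rw [det_eq_sign_charpoly_coeff, charpoly_mul_comm_of_le A B h.le, coeff_X_pow_mul',
    if_neg (Nat.sub_pos_of_lt h).not_ge, mul_zero]

/-- The `t × t` Hankel matrix of a sequence, indexed from `0`; the paper's `M_{t,l}(G)` is
`hankel (fun k => (G ^ (k + l)).trace) t`. -/
def hankel {α : Type*} (u : ℕ → α) (t : ℕ) : Matrix (Fin t) (Fin t) α :=
  of fun i j => u (i + j)

theorem hankel_sum_mul_pow [Fintype ι] [DecidableEq ι] (c x : ι → R) (t : ℕ) :
    hankel (fun k => ∑ s, c s * x s ^ k) t =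
      (rectVandermonde x 1 t)ᵀ * (diagonal c * rectVandermonde x 1 t) := by
  ext i j
  simp [hankel, mul_apply, rectVandermonde_apply, diagonal_apply, pow_add, mul_left_comm]

theorem det_hankel_sum_mul_pow {t : ℕ} (c x : Fin t → R) :
    (hankel (fun k => ∑ s, c s * x s ^ k) t).det =
      (∏ s, c s) * (∏ i, ∏ j ∈ Finset.Ioi i, (x j - x i)) ^ 2 := by
  have hV : rectVandermonde x 1 t = vandermonde x := by
    rw [vandermonde_eq_projVandermonde, projVandermonde]
  rw [hankel_sum_mul_pow, hV, det_mul, det_mul, det_transpose, det_diagonal, det_vandermonde]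
  ring

theorem det_hankel_sum_mul_pow_eq_zero_of_card_lt [Fintype ι] (c x : ι → R) {t : ℕ}
    (ht : Fintype.card ι < t) : (hankel (fun k => ∑ s, c s * x s ^ k) t).det = 0 := by
  classical
  rw [hankel_sum_mul_pow]
  exact det_mul_eq_zero_of_card_lt _ _ (by simpa using ht)

end Hankel

theorem det_M_two_eigenvalues_general {R m : Type*} [CommRing R] [Fintype m] [DecidableEq m]
    {p q : ℕ} (G : Matrix m m R) (lam mu : R)
    (hchar : G.charpoly = (X - C lam) ^ p * (X - C mu) ^ q) :
    (∀ l : ℕ,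
      (Matrix.of fun i j : Fin 1 => (G ^ (i.1 + j.1 + l)).trace).det
        = p * lam ^ l + q * mu ^ l) ∧
    (∀ l : ℕ,
      (Matrix.of fun i j : Fin 2 => (G ^ (i.1 + j.1 + l)).trace).det
        = p * q * (lam * mu) ^ l * (lam - mu) ^ 2) ∧
    (∀ t l : ℕ, 3 ≤ t →
      (Matrix.of fun i j : Fin t => (G ^ (i.1 + j.1 + l)).trace).det = 0) := by
  have hprod : G.charpoly = ∏ s, (X - C (![lam, mu] s)) ^ ![p, q] s := by
    rw [hchar, Fin.prod_univ_two]
    rfl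
  have htrace (k l : ℕ) :
      (G ^ (k + l)).trace = ∑ s, (![p, q] s * ![lam, mu] s ^ l) * ![lam, mu] s ^ k := by
    rw [trace_pow_eq_sum_of_charpoly_eq_prod _ _ hprod]
    exact Finset.sum_congr rfl fun s _ => by ring
  simp_rw [htrace]
  refine ⟨fun l => ?_, fun l => ?_, fun t l ht => ?_⟩
  · simp
  · calc _ = (∏ s, ![p, q] s * ![lam, mu] s ^ l) *
          (∏ i, ∏ j ∈ Finset.Ioi i, (![lam, mu] j - ![lam, mu] i)) ^ 2 :=
        det_hankel_sum_mul_pow _ _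
      _ = (p * lam ^ l * (q * mu ^ l)) * (mu - lam) ^ 2 := by
        simp [Fin.prod_univ_two, show Finset.Ioi (1 : Fin 2) = ∅ from rfl]
      _ = p * q * (lam * mu) ^ l * (lam - mu) ^ 2 := by ring
  · exact det_hankel_sum_mul_pow_eq_zero_of_card_lt _ _ (by rwa [Fintype.card_fin])

/-- Let `G` be an `n × n` matrix over an algebraically closed field
whose characteristic polynomial is `(X - λ)^p (X - μ)^q` with `λ ≠ μ` and `p, q ≥ 1`
(so `G` has exactly the two eigenvalues `λ, μ` with multiplicities `p, q`).  Then for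
every `l ≥ 0`: `det M_{1,l}(G) = p·λ^l + q·μ^l`,
`det M_{2,l}(G) = p·q·(λμ)^l·(λ - μ)²`, and `det M_{t,l}(G) = 0` for every `t ≥ 3`.
Here the `(i,j)` entry of `M_{t,l}(G)` (`0`-based) is `tr G^{i+j+l}`. -/
theorem det_M_two_eigenvalues {K : Type*} [Field K] [IsAlgClosed K] {n p q : ℕ}
    (G : Matrix (Fin n) (Fin n) K) (lam mu : K) (hne : lam ≠ mu)
    (hp : 1 ≤ p) (hq : 1 ≤ q)
    (hchar : G.charpoly = (X - C lam) ^ p * (X - C mu) ^ q) :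
    (∀ l : ℕ,
      (Matrix.of fun i j : Fin 1 => (G ^ (i.1 + j.1 + l)).trace).det
        = p * lam ^ l + q * mu ^ l) ∧
    (∀ l : ℕ,
      (Matrix.of fun i j : Fin 2 => (G ^ (i.1 + j.1 + l)).trace).det
        = p * q * (lam * mu) ^ l * (lam - mu) ^ 2) ∧
    (∀ t l : ℕ, 3 ≤ t →
      (Matrix.of fun i j : Fin t => (G ^ (i.1 + j.1 + l)).trace).det = 0) := by
  exact det_M_two_eigenvalues_general G lam mu hchar
end
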